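/- arXiv:1408.2768 — 2 statements merged into one kernel-verified Lean document; each statement's English description precedes it below -/
import Mathlib

section
/- Let δ ∈ [1/2, 1], and let θ : ℝ × ℝ → ℝ be a smooth (C^∞) function, 2π-periodic in the space variable, with θ(t,x) ≥ 0 for all (t,x). For each t let h(t,·) be the periodic Hilbert transform of θ(t,·) (ĥ(t,k) = −i·sgn(k)·θ̂(t,k) for all k ∈ ℤ, where û(k) = (1/2π)∫₀^{2π}u(x)e^{−ikx}dx), and assume h is smooth. Suppose ∂_t θ + (1−δ) h ∂_x θ + δ ∂_x(θ h) = 0. Then the function t ↦ ∫₀^{2π} θ(t,x)² dx is nonincreasing; indeed its derivative equals (1 − 2δ)∫₀^{2π} θ(t,x)² ∂_x h(t,x) dx ≤ 0. -/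
open MeasureTheory

/-- The `k`-th Fourier coefficient of a `2π`-periodic function `u : ℝ → ℝ`:
`û(k) = (1/2π) ∫₀^{2π} u(x) e^{−ikx} dx`. -/
noncomputable def fourierCoef (u : ℝ → ℝ) (k : ℤ) : ℂ :=
  (1 / (2 * Real.pi) : ℝ) *
    ∫ x in (0:ℝ)..(2 * Real.pi), (u x : ℂ) * Complex.exp (-Complex.I * k * x)

/-- `v` is the periodic Hilbert transform of `u`: `v` is continuous, `2π`-periodic, and
`v̂(k) = −i·sgn(k)·û(k)` for all `k ∈ ℤ`. -/
def IsHilbertTransformOf (v u : ℝ → ℝ) : Prop :=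
  Continuous v ∧ Function.Periodic v (2 * Real.pi) ∧
    ∀ k : ℤ, fourierCoef v k = -Complex.I * (Int.sign k : ℂ) * fourierCoef u k

/-!
Write `Λ = ∂ₓℋ`, the Fourier multiplier with symbol `|k|`. Multiplying the equation by `2θ` and
integrating by parts, the transport terms collapse to `(1 - 2δ) ∫ θ² Λθ`, so everything rests on
`∫ θ² Λθ ≥ 0`. Since `∫₀^{2π} (1 - cos ks) / (1 - cos s) ds = 2π|k|`, averaging Parseval's identity
for the increments `φ(· + s) - φ` and `u(· + s) - u` against `1 / (1 - cos s)` gives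
`∫ φ Λu = (4π)⁻¹ ∬ (φ(x + s) - φ(x)) (u(x + s) - u(x)) / (1 - cos s) dx ds`.
For `u = θ ≥ 0` and `φ = θ²` the two increments always have the same sign.
-/

open scoped ComplexConjugate
open Set Real

section Parseval

lemma exists_continuousMap_addCircle_eq {E : Type*} [TopologicalSpace E] {T : ℝ}
    {f : ℝ → E} (hf : Continuous f) (hper : Function.Periodic f T) :
    ∃ F : C(AddCircle T, E), ∀ x : ℝ, F x = f x :=
  ⟨⟨hper.lift, continuous_coinduced_dom.mpr hf⟩, hper.lift_coe⟩

lemma hasSum_conj_fourierCoeff_mul_fourierCoeff {T : ℝ} [Fact (0 < T)]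
    (F G : C(AddCircle T, ℂ)) :
    HasSum (fun k : ℤ => conj (fourierCoeff F k) * fourierCoeff G k)
      (∫ x, conj (F x) * G x ∂AddCircle.haarAddCircle) := by
  have hcoeff (H : C(AddCircle T, ℂ)) (k : ℤ) :
      inner ℂ (fourierBasis k) (H.toLp 2 AddCircle.haarAddCircle ℂ) = fourierCoeff H k := by
    rw [← HilbertBasis.repr_apply_apply, fourierBasis_repr, fourierCoeff_toLp]
  have hsum := fourierBasis.hasSum_inner_mul_inner (F.toLp 2 AddCircle.haarAddCircle ℂ)
    (G.toLp 2 AddCircle.haarAddCircle ℂ)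
  simp_rw [← inner_conj_symm (F.toLp 2 AddCircle.haarAddCircle ℂ) (fourierBasis _), hcoeff,
    ContinuousMap.inner_toLp, mul_comm (G _)] at hsum
  exact hsum

lemma fourierCoeff_eq_fourierCoef [Fact (0 < 2 * π)] {u : ℝ → ℝ}
    {U : AddCircle (2 * π) → ℂ} (hU : ∀ x : ℝ, U x = u x) (k : ℤ) :
    fourierCoeff U k = fourierCoef u k := by
  rw [fourierCoeff_eq_intervalIntegral _ _ 0, fourierCoef, zero_add, Complex.real_smul]
  congr 2 with x
  rw [hU, smul_eq_mul, fourier_coe_apply, mul_comm]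
  congr 2
  push_cast
  field_simp

lemma hasSum_conj_fourierCoef_mul_fourierCoef {u v : ℝ → ℝ} (hu : Continuous u)
    (hv : Continuous v) (pu : Function.Periodic u (2 * π)) (pv : Function.Periodic v (2 * π)) :
    HasSum (fun k : ℤ => conj (fourierCoef u k) * fourierCoef v k)
      ((2 * π)⁻¹ * ∫ x in 0..2 * π, u x * v x : ℝ) := by
  have : Fact (0 < 2 * π) := ⟨two_pi_pos⟩
  obtain ⟨U, hU⟩ :=
    exists_continuousMap_addCircle_eq (Complex.continuous_ofReal.comp hu) (pu.comp _)
  obtain ⟨V, hV⟩ :=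
    exists_continuousMap_addCircle_eq (Complex.continuous_ofReal.comp hv) (pv.comp _)
  have hsum := hasSum_conj_fourierCoeff_mul_fourierCoeff U V
  simp only [fourierCoeff_eq_fourierCoef hU, fourierCoeff_eq_fourierCoef hV] at hsum
  convert hsum using 1
  rw [AddCircle.integral_haarAddCircle, ← AddCircle.intervalIntegral_preimage _ 0, zero_add,
    Complex.real_smul, Complex.ofReal_mul, ← intervalIntegral.integral_ofReal]
  simp [hU, hV]

end Parseval

section FourierCoef

variable {u v : ℝ → ℝ}

lemma fourierCoef_sub (hu : IntervalIntegrable u volume 0 (2 * π))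
    (hv : IntervalIntegrable v volume 0 (2 * π)) (k : ℤ) :
    fourierCoef (fun x => u x - v x) k = fourierCoef u k - fourierCoef v k := by
  have hint {w : ℝ → ℝ} (hw : IntervalIntegrable w volume 0 (2 * π)) :
      IntervalIntegrable (fun x => (w x : ℂ) * Complex.exp (-Complex.I * k * x))
        volume 0 (2 * π) :=
    IntervalIntegrable.mul_continuousOn ⟨hw.1.ofReal, hw.2.ofReal⟩ (by fun_prop)
  simp only [fourierCoef, Complex.ofReal_sub, sub_mul]
  rw [intervalIntegral.integral_sub (hint hu) (hint hv), mul_sub]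

lemma periodic_cexp_neg_I_mul_int (k : ℤ) :
    Function.Periodic (fun x : ℝ => Complex.exp (-Complex.I * k * x)) (2 * π) := fun x => by
  refine Complex.exp_eq_exp_iff_exists_int.mpr ⟨-k, ?_⟩
  push_cast
  ring

lemma fourierCoef_comp_add_const (pu : Function.Periodic u (2 * π)) (s : ℝ) (k : ℤ) :
    fourierCoef (fun x => u (x + s)) k = Complex.exp (Complex.I * k * s) * fourierCoef u k := by
  set f : ℝ → ℂ := fun x => u x * Complex.exp (-Complex.I * k * x) with hf
  have hper : Function.Periodic f (2 * π) := (pu.comp Complex.ofReal).mul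
    (periodic_cexp_neg_I_mul_int k)
  have hshift (x : ℝ) : u (x + s) * Complex.exp (-Complex.I * k * x) =
      Complex.exp (Complex.I * k * s) * f (x + s) := by
    rw [hf, mul_left_comm, ← Complex.exp_add]
    push_cast
    ring_nf
  have htranslate : ∫ x in 0..2 * π, f (x + s) = ∫ x in 0..2 * π, f x := by
    simpa [add_comm] using hper.intervalIntegral_add_eq s 0
  simp only [fourierCoef, hshift]
  rw [intervalIntegral.integral_const_mul, htranslate, mul_left_comm]

lemma fourierCoef_deriv (hu : ContDiff ℝ 1 u) (pu : Function.Periodic u (2 * π)) (k : ℤ) :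
    fourierCoef (deriv u) k = Complex.I * k * fourierCoef u k := by
  set e : ℝ → ℂ := fun x => Complex.exp (-Complex.I * k * x)
  have he_per : Function.Periodic e (2 * π) := periodic_cexp_neg_I_mul_int k
  have he_deriv (x : ℝ) : HasDerivAt e (e x * (-Complex.I * k)) x := by
    have hlin := (Complex.ofRealCLM.hasDerivAt (x := x)).const_mul (-Complex.I * k)
    rw [Complex.ofRealCLM_apply, Complex.ofReal_one, mul_one] at hlin
    exact hlin.cexp
  have hu_deriv (x : ℝ) : HasDerivAt (fun x => (u x : ℂ)) (deriv u x : ℝ) x :=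
    ((hu.differentiable one_ne_zero x).hasDerivAt).ofReal_comp
  have hparts := intervalIntegral.integral_mul_deriv_eq_deriv_mul (a := 0) (b := 2 * π)
    (fun x _ => he_deriv x) (fun x _ => hu_deriv x)
    (Continuous.intervalIntegrable (by fun_prop) _ _)
    ((Complex.continuous_ofReal.comp hu.continuous_deriv_one).intervalIntegrable _ _)
  rw [pu.eq, he_per.eq, sub_self, zero_sub] at hparts
  have hint : ∫ x in 0..2 * π, deriv u x * e x =
      Complex.I * k * ∫ x in 0..2 * π, u x * e x := by
    rw [← intervalIntegral.integral_const_mul]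
    simp only [mul_comm _ (e _)]
    rw [hparts, ← intervalIntegral.integral_neg]
    congr 1 with x
    ring
  rw [fourierCoef, hint, fourierCoef, mul_left_comm]

lemma conj_cexp_sub_one_mul_self (k : ℤ) (s : ℝ) :
    conj (Complex.exp (Complex.I * k * s) - 1) * (Complex.exp (Complex.I * k * s) - 1) =
      (2 * (1 - cos (k * s)) : ℝ) := by
  have harg : Complex.I * k * s = (k * s : ℝ) * Complex.I := by push_cast; ring
  rw [mul_comm, Complex.mul_conj, harg, Complex.normSq_apply]
  simp only [Complex.sub_re, Complex.sub_im, Complex.one_re, Complex.one_im,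
    Complex.exp_ofReal_mul_I_re, Complex.exp_ofReal_mul_I_im]
  congr 1
  linear_combination sin_sq_add_cos_sq (k * s)

lemma hasSum_conj_fourierCoef_mul_fourierCoef_increments {φ : ℝ → ℝ} (hφ : Continuous φ)
    (hu : Continuous u) (pφ : Function.Periodic φ (2 * π)) (pu : Function.Periodic u (2 * π))
    (s : ℝ) :
    HasSum (fun k : ℤ =>
        ((2 * (1 - cos (k * s)) : ℝ) : ℂ) * (conj (fourierCoef φ k) * fourierCoef u k))
      ((2 * π)⁻¹ * ∫ x in 0..2 * π, (φ (x + s) - φ x) * (u (x + s) - u x) : ℝ) := by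
  have hcoef {w : ℝ → ℝ} (hw : Continuous w) (pw : Function.Periodic w (2 * π)) (k : ℤ) :
      fourierCoef (fun x => w (x + s) - w x) k =
        (Complex.exp (Complex.I * k * s) - 1) * fourierCoef w k := by
    rw [fourierCoef_sub (Continuous.intervalIntegrable (by fun_prop) _ _)
      (hw.intervalIntegrable _ _), fourierCoef_comp_add_const pw, sub_one_mul]
  have hper {w : ℝ → ℝ} (pw : Function.Periodic w (2 * π)) :
      Function.Periodic (fun x => w (x + s) - w x) (2 * π) := (pw.add_const s).sub pw
  convert hasSum_conj_fourierCoef_mul_fourierCoef (u := fun x => φ (x + s) - φ x)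
    (v := fun x => u (x + s) - u x) (by fun_prop) (by fun_prop) (hper pφ) (hper pu) using 2 with k
  rw [hcoef hφ pφ, hcoef hu pu, map_mul, mul_mul_mul_comm, conj_cexp_sub_one_mul_self]

end FourierCoef

section FejerIntegral

/-- The Dirichlet kernel `∑_{|j| ≤ m} e^{ijs}`, written with cosines so as to be real-valued. -/
noncomputable def dirichletKernel (m : ℕ) (s : ℝ) : ℝ :=
  1 + 2 * ∑ j ∈ Finset.range m, cos ((j + 1 : ℕ) * s)

lemma continuous_dirichletKernel (m : ℕ) : Continuous (dirichletKernel m) := by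
  unfold dirichletKernel
  fun_prop

lemma integral_dirichletKernel (m : ℕ) : ∫ s in 0..2 * π, dirichletKernel m s = 2 * π := by
  have hcos (j : ℕ) : ∫ s in 0..2 * π, cos ((j + 1 : ℕ) * s) = 0 := by
    rw [intervalIntegral.integral_comp_mul_left (fun s => cos s) (by positivity), integral_cos,
      mul_zero, sin_zero, sub_zero, sin_periodic.nat_mul_eq, sin_zero, smul_zero]
  unfold dirichletKernel
  rw [intervalIntegral.integral_add (by simp) (Continuous.intervalIntegrable (by fun_prop) _ _),
    intervalIntegral.integral_const_mul, intervalIntegral.integral_finsetSum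
      (fun _ _ => Continuous.intervalIntegrable (by fun_prop) _ _)]
  simp only [hcos]
  simp

lemma one_sub_cos_mul_dirichletKernel (m : ℕ) (s : ℝ) :
    (1 - cos s) * dirichletKernel m s = cos (m * s) - cos ((m + 1 : ℕ) * s) := by
  induction m with
  | zero => simp [dirichletKernel]
  | succ m ih =>
    have hrec : dirichletKernel (m + 1) s = dirichletKernel m s + 2 * cos ((m + 1 : ℕ) * s) := by
      rw [dirichletKernel, Finset.sum_range_succ, dirichletKernel]
      ring
    have hprod : cos (m * s) + cos ((m + 1 + 1 : ℕ) * s) = 2 * cos ((m + 1 : ℕ) * s) * cos s := by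
      have hleft : (m * s : ℝ) = (m + 1 : ℕ) * s - s := by push_cast; ring
      have hright : ((m + 1 + 1 : ℕ) * s : ℝ) = (m + 1 : ℕ) * s + s := by push_cast; ring
      rw [hleft, hright, cos_sub, cos_add]
      ring
    rw [hrec, mul_add, ih]
    linear_combination hprod

lemma one_sub_cos_mul_sum_dirichletKernel (n : ℕ) (s : ℝ) :
    (1 - cos s) * ∑ m ∈ Finset.range n, dirichletKernel m s = 1 - cos (n * s) := by
  simp_rw [Finset.mul_sum, one_sub_cos_mul_dirichletKernel]
  rw [Finset.sum_range_sub' fun m : ℕ => cos (m * s), Nat.cast_zero, zero_mul, cos_zero]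

lemma one_sub_cos_pos_of_mem_Ioo {s : ℝ} (hs : s ∈ Ioo 0 (2 * π)) : 0 < 1 - cos s :=
  sub_pos.mpr <| (cos_le_one s).lt_of_ne fun h =>
    hs.1.ne' ((cos_eq_one_iff_of_lt_of_lt (by linarith [hs.1, pi_pos]) hs.2).mp h)

lemma one_sub_cos_int_mul_div_eqOn (k : ℤ) :
    EqOn (fun s => (1 - cos (k * s)) / (1 - cos s))
      (fun s => ∑ m ∈ Finset.range k.natAbs, dirichletKernel m s) (Ioo 0 (2 * π)) := fun s hs => by
  have habs : cos (k.natAbs * s) = cos (k * s) := by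
    rw [Nat.cast_natAbs, Int.cast_abs, ← cos_abs, abs_mul, abs_abs, ← abs_mul, cos_abs]
  exact (div_eq_iff (one_sub_cos_pos_of_mem_Ioo hs).ne').mpr <| by
    rw [mul_comm _ (1 - cos s), one_sub_cos_mul_sum_dirichletKernel, habs]

lemma integrableOn_one_sub_cos_int_mul_div (k : ℤ) :
    IntegrableOn (fun s => (1 - cos (k * s)) / (1 - cos s)) (Ioo 0 (2 * π)) := by
  rw [integrableOn_congr_fun (one_sub_cos_int_mul_div_eqOn k) measurableSet_Ioo]
  exact ((continuous_finsetSum _ fun m _ => continuous_dirichletKernel m).integrableOn_Icc).mono_set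
    Ioo_subset_Icc_self

lemma integral_one_sub_cos_int_mul_div (k : ℤ) :
    ∫ s in Ioo 0 (2 * π), (1 - cos (k * s)) / (1 - cos s) = 2 * π * |(k : ℝ)| := by
  rw [setIntegral_congr_fun measurableSet_Ioo (one_sub_cos_int_mul_div_eqOn k),
    ← integral_Ioc_eq_integral_Ioo, ← intervalIntegral.integral_of_le two_pi_pos.le,
    intervalIntegral.integral_finsetSum
      fun m _ => (continuous_dirichletKernel m).intervalIntegrable _ _]
  simp only [integral_dirichletKernel]
  simp [mul_comm]

lemma integral_norm_one_sub_cos_int_mul_div_mul (k : ℤ) (z : ℂ) :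
    ∫ s in Ioo 0 (2 * π), ‖((1 - cos (k * s)) / (1 - cos s) : ℝ) * z‖ =
      2 * π * (|(k : ℝ)| * ‖z‖) := by
  have hnorm (s : ℝ) : ‖((1 - cos (k * s)) / (1 - cos s) : ℝ) * z‖ =
      (1 - cos (k * s)) / (1 - cos s) * ‖z‖ := by
    rw [norm_mul, Complex.norm_of_nonneg (div_nonneg (sub_nonneg.mpr (cos_le_one _))
      (sub_nonneg.mpr (cos_le_one s)))]
  simp only [hnorm]
  rw [integral_mul_const, integral_one_sub_cos_int_mul_div, mul_assoc]

lemma hasSum_abs_mul_integral_tsum_one_sub_cos_div {c : ℤ → ℂ}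
    (hc : Summable fun k : ℤ => (|(k : ℝ)| : ℝ) * c k) :
    HasSum (fun k : ℤ => (|(k : ℝ)| : ℝ) * c k) (((2 * π : ℝ) : ℂ)⁻¹ *
      ∫ s in Ioo 0 (2 * π), ∑' k : ℤ, ((1 - cos (k * s)) / (1 - cos s) : ℝ) * c k) := by
  set F : ℤ → ℝ → ℂ := fun k s => ((1 - cos (k * s)) / (1 - cos s) : ℝ) * c k with hF
  have hF_integrable (k : ℤ) : IntegrableOn (F k) (Ioo 0 (2 * π)) :=
    (integrableOn_one_sub_cos_int_mul_div k).ofReal.mul_const (c k)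
  have hF_norm : Summable fun k => ∫ s in Ioo 0 (2 * π), ‖F k s‖ := by
    simp only [hF, integral_norm_one_sub_cos_int_mul_div_mul]
    simpa using hc.norm.mul_left (2 * π)
  have hF_integral (k : ℤ) :
      ((2 * π : ℝ) : ℂ)⁻¹ * ∫ s in Ioo 0 (2 * π), F k s = (|(k : ℝ)| : ℝ) * c k := by
    rw [hF, integral_mul_const, integral_complex_ofReal, integral_one_sub_cos_int_mul_div]
    push_cast
    field_simp
  have hsum := (hasSum_integral_of_summable_integral_norm hF_integrable hF_norm).mul_left
    ((2 * π : ℝ) : ℂ)⁻¹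
  simpa only [hF_integral] using hsum

end FejerIntegral

/-- `g` is a continuous periodic representative of `Λu = (-∂ₓ²)^{1/2} u`: it is continuous,
`2π`-periodic, and `ĝ(k) = |k| û(k)` for all `k ∈ ℤ`. -/
def IsHalfLaplacianOf (g u : ℝ → ℝ) : Prop :=
  Continuous g ∧ Function.Periodic g (2 * π) ∧
    ∀ k : ℤ, fourierCoef g k = (|(k : ℝ)| : ℝ) * fourierCoef u k

lemma periodic_deriv {f : ℝ → ℝ} {T : ℝ} (hf : Function.Periodic f T) :
    Function.Periodic (deriv f) T := fun x => by
  rw [← deriv_comp_add_const, funext hf]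

lemma IsHilbertTransformOf.isHalfLaplacianOf_deriv {v u : ℝ → ℝ} (h : IsHilbertTransformOf v u)
    (hv : ContDiff ℝ 1 v) : IsHalfLaplacianOf (deriv v) u := by
  obtain ⟨-, pv, hcoef⟩ := h
  refine ⟨hv.continuous_deriv_one, periodic_deriv pv, fun k => ?_⟩
  have habs : ((|(k : ℝ)| : ℝ) : ℂ) = k * Int.sign k := by
    rw [← Int.cast_mul, Int.mul_sign_self, ← Int.cast_abs, Int.natCast_natAbs,
      Complex.ofReal_intCast]
  rw [fourierCoef_deriv hv pv, hcoef, habs]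
  linear_combination (-(k : ℂ) * (Int.sign k : ℂ) * fourierCoef u k) * Complex.I_mul_I

namespace IsHalfLaplacianOf

variable {g u φ : ℝ → ℝ}

theorem integral_mul_eq (hg : IsHalfLaplacianOf g u) (hu : Continuous u)
    (pu : Function.Periodic u (2 * π)) (hφ : Continuous φ) (pφ : Function.Periodic φ (2 * π)) :
    ∫ x in 0..2 * π, φ x * g x = (4 * π)⁻¹ * ∫ s in Ioo 0 (2 * π),
      (∫ x in 0..2 * π, (φ (x + s) - φ x) * (u (x + s) - u x)) / (1 - cos s) := by
  obtain ⟨hgc, pg, hcoef⟩ := hg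
  set c : ℤ → ℂ := fun k => conj (fourierCoef φ k) * fourierCoef u k with hc
  have hsum_spectral : HasSum (fun k : ℤ => (|(k : ℝ)| : ℝ) * c k)
      ((2 * π)⁻¹ * ∫ x in 0..2 * π, φ x * g x : ℝ) := by
    convert hasSum_conj_fourierCoef_mul_fourierCoef hφ hgc pφ pg using 2 with k
    rw [hcoef, hc, mul_left_comm]
  -- Where `cos s = 1` both sides vanish, since `x / 0 = 0`.
  have htsum_increments (s : ℝ) : ∑' k : ℤ, ((1 - cos (k * s)) / (1 - cos s) : ℝ) * c k =
      ((4 * π)⁻¹ *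
        ((∫ x in 0..2 * π, (φ (x + s) - φ x) * (u (x + s) - u x)) / (1 - cos s)) : ℝ) := by
    convert ((hasSum_conj_fourierCoef_mul_fourierCoef_increments hφ hu pφ pu s).mul_left
      (((2 * (1 - cos s))⁻¹ : ℝ) : ℂ)).tsum_eq using 1
    · refine tsum_congr fun k => ?_
      rw [← mul_assoc (_ : ℂ) _ (c k), ← Complex.ofReal_mul, inv_mul_eq_div,
        mul_div_mul_left _ _ two_ne_zero]
    · rw [← Complex.ofReal_mul]
      congr 1
      rw [mul_inv, mul_inv, mul_inv]
      ring
  have heq := hsum_spectral.unique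
    (hasSum_abs_mul_integral_tsum_one_sub_cos_div hsum_spectral.summable)
  simp only [htsum_increments] at heq
  rw [integral_complex_ofReal, integral_const_mul] at heq
  norm_cast at heq
  exact mul_left_cancel₀ (by positivity) heq

theorem integral_mul_nonneg_of_monovary (hg : IsHalfLaplacianOf g u) (hu : Continuous u)
    (pu : Function.Periodic u (2 * π)) (hφ : Continuous φ) (pφ : Function.Periodic φ (2 * π))
    (hmono : Monovary φ u) : 0 ≤ ∫ x in 0..2 * π, φ x * g x := by
  rw [hg.integral_mul_eq hu pu hφ pφ]
  refine mul_nonneg (by positivity) (integral_nonneg fun s => ?_)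
  exact div_nonneg (intervalIntegral.integral_nonneg two_pi_pos.le fun x _ =>
    monovary_iff_forall_mul_nonneg.mp hmono x (x + s)) (sub_nonneg.mpr (cos_le_one s))

end IsHalfLaplacianOf

section Energy

lemma hasDerivAt_intervalIntegral_of_contDiff {f : ℝ × ℝ → ℝ} (hf : ContDiff ℝ 1 f)
    (a b t : ℝ) :
    HasDerivAt (fun s => ∫ x in a..b, f (s, x)) (∫ x in a..b, deriv (fun s => f (s, x)) t) t := by
  have hderiv (s x : ℝ) : HasDerivAt (fun s => f (s, x)) (fderiv ℝ f (s, x) (1, 0)) s :=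
    (hf.differentiable one_ne_zero (s, x)).hasFDerivAt.comp_hasDerivAt s
      ((hasDerivAt_id s).prodMk (hasDerivAt_const s x))
  have hcont : Continuous fun p => fderiv ℝ f p (1, 0) :=
    (hf.continuous_fderiv one_ne_zero).clm_apply continuous_const
  have hf_cont := hf.continuous
  obtain ⟨C, hC⟩ := ((isCompact_closedBall t 1).prod
    (isCompact_uIcc (a := a) (b := b))).exists_bound_of_continuousOn hcont.continuousOn
  simp only [fun x => (hderiv t x).deriv]
  exact (intervalIntegral.hasDerivAt_integral_of_dominated_loc_of_deriv_le
    (F := fun s x => f (s, x)) (F' := fun s x => fderiv ℝ f (s, x) (1, 0)) (bound := fun _ => C)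
    (Metric.closedBall_mem_nhds t one_pos)
    (.of_forall fun s => Continuous.aestronglyMeasurable (by fun_prop))
    (Continuous.intervalIntegrable (by fun_prop) _ _)
    (Continuous.aestronglyMeasurable (by fun_prop))
    (.of_forall fun x hx s hs => hC (s, x) ⟨hs, uIoc_subset_uIcc hx⟩)
    intervalIntegrable_const
    (.of_forall fun x _ s _ => hderiv s x)).2

lemma intervalIntegral_deriv_eq_zero_of_periodic {f : ℝ → ℝ} {T : ℝ}
    (hf : ContDiff ℝ 1 f) (hper : Function.Periodic f T) : ∫ x in 0..T, deriv f x = 0 := by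
  rw [intervalIntegral.integral_deriv_of_contDiffOn_uIcc hf.contDiffOn, hper.eq, sub_self]

theorem hasDerivAt_integral_sq_of_transport {δ T t : ℝ} {θ h : ℝ × ℝ → ℝ} (hθ : ContDiff ℝ 1 θ)
    (hh : ContDiff ℝ 1 fun x => h (t, x))
    (pθ : Function.Periodic (fun x => θ (t, x)) T) (ph : Function.Periodic (fun x => h (t, x)) T)
    (hpde : ∀ x, deriv (fun s => θ (s, x)) t + (1 - δ) * h (t, x) * deriv (fun y => θ (t, y)) x
      + δ * deriv (fun y => θ (t, y) * h (t, y)) x = 0) :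
    HasDerivAt (fun s => ∫ x in 0..T, θ (s, x) ^ 2)
      ((1 - 2 * δ) * ∫ x in 0..T, θ (t, x) ^ 2 * deriv (fun y => h (t, y)) x) t := by
  have hθt : ContDiff ℝ 1 fun x => θ (t, x) := by fun_prop
  have hθh : ContDiff ℝ 1 fun x => θ (t, x) ^ 2 * h (t, x) := (hθt.pow 2).mul hh
  have hpointwise (x : ℝ) : deriv (fun s => θ (s, x) ^ 2) t =
      (1 - 2 * δ) * (θ (t, x) ^ 2 * deriv (fun y => h (t, y)) x) -
        deriv (fun y => θ (t, y) ^ 2 * h (t, y)) x := by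
    have dθt : DifferentiableAt ℝ (fun y => θ (t, y)) x := hθt.differentiable one_ne_zero x
    have dh : DifferentiableAt ℝ (fun y => h (t, y)) x := hh.differentiable one_ne_zero x
    have dθs : DifferentiableAt ℝ (fun s => θ (s, x)) t :=
      ContDiff.differentiable (n := 1) (by fun_prop) one_ne_zero t
    have hpde_x := hpde x
    rw [deriv_fun_mul dθt dh] at hpde_x
    rw [deriv_fun_pow dθs, deriv_fun_mul (dθt.fun_pow 2) dh, deriv_fun_pow dθt]
    push_cast
    linear_combination 2 * θ (t, x) * hpde_x
  convert hasDerivAt_intervalIntegral_of_contDiff (hθ.pow 2) 0 T t using 1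
  have hcont := hh.continuous_deriv_one
  have hcont' := hθh.continuous_deriv_one
  simp only [hpointwise]
  rw [intervalIntegral.integral_sub (Continuous.intervalIntegrable (by fun_prop) _ _)
      (hcont'.intervalIntegrable _ _), intervalIntegral.integral_const_mul,
    intervalIntegral_deriv_eq_zero_of_periodic hθh ((pθ.comp (· ^ 2)).mul ph), sub_zero]

end Energy

theorem L2_estimate_1d_model_general {δ : ℝ} (hδ : 1 / 2 ≤ δ) {θ h : ℝ × ℝ → ℝ}
    (hθ : ContDiff ℝ 1 θ) (hh : ∀ t, ContDiff ℝ 1 fun x => h (t, x))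
    (hθper : ∀ t x : ℝ, θ (t, x + 2 * π) = θ (t, x)) (hθnonneg : ∀ p, 0 ≤ θ p)
    (hhilb : ∀ t : ℝ, IsHilbertTransformOf (fun x => h (t, x)) (fun x => θ (t, x)))
    (hpde : ∀ t x : ℝ,
      deriv (fun s => θ (s, x)) t
        + (1 - δ) * h (t, x) * deriv (fun y => θ (t, y)) x
        + δ * deriv (fun y => θ (t, y) * h (t, y)) x = 0) :
    Antitone (fun t => ∫ x in 0..2 * π, θ (t, x) ^ 2) ∧
    ∀ t : ℝ,
      HasDerivAt (fun s => ∫ x in 0..2 * π, θ (s, x) ^ 2)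
        ((1 - 2 * δ) * ∫ x in 0..2 * π, θ (t, x) ^ 2 * deriv (fun y => h (t, y)) x) t ∧
      (1 - 2 * δ) * (∫ x in 0..2 * π, θ (t, x) ^ 2 * deriv (fun y => h (t, y)) x) ≤ 0 := by
  have pθ (t : ℝ) : Function.Periodic (fun x => θ (t, x)) (2 * π) := hθper t
  have hderiv (t : ℝ) := hasDerivAt_integral_sq_of_transport hθ (hh t) (pθ t) (hhilb t).2.1
    (hpde t)
  have hnonneg (t : ℝ) : 0 ≤ ∫ x in 0..2 * π, θ (t, x) ^ 2 * deriv (fun y => h (t, y)) x :=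
    ((hhilb t).isHalfLaplacianOf_deriv (hh t)).integral_mul_nonneg_of_monovary
      (by fun_prop) (pθ t) (by fun_prop) ((pθ t).comp (· ^ 2))
      ((monovary_self _).pow_left₀ (fun x => hθnonneg (t, x)) 2)
  have hnonpos (t : ℝ) := mul_nonpos_of_nonpos_of_nonneg
    (show 1 - 2 * δ ≤ 0 by linarith) (hnonneg t)
  exact ⟨antitone_of_hasDerivAt_nonpos hderiv hnonpos, fun t => ⟨hderiv t, hnonpos t⟩⟩

/-- L² a priori estimate for `θ_t + (1−δ) ℋθ·θ_x + δ (θ ℋθ)_x = 0` with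
`δ ∈ [1/2,1]` and `θ ≥ 0`: the L² norm squared is nonincreasing, and its derivative
equals `(1−2δ) ∫ θ² (ℋθ)_x dx ≤ 0`. -/
theorem L2_estimate_1d_model (δ : ℝ) (hδ : δ ∈ Set.Icc (1/2 : ℝ) 1)
    (θ h : ℝ × ℝ → ℝ)
    (hθ : ContDiff ℝ (⊤ : ℕ∞) θ) (hh : ContDiff ℝ (⊤ : ℕ∞) h)
    (hθper : ∀ t x : ℝ, θ (t, x + 2 * Real.pi) = θ (t, x))
    (hθnonneg : ∀ p : ℝ × ℝ, 0 ≤ θ p)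
    (hhilb : ∀ t : ℝ, IsHilbertTransformOf (fun x => h (t, x)) (fun x => θ (t, x)))
    (hpde : ∀ t x : ℝ,
      deriv (fun s => θ (s, x)) t
        + (1 - δ) * h (t, x) * deriv (fun y => θ (t, y)) x
        + δ * deriv (fun y => θ (t, y) * h (t, y)) x = 0) :
    Antitone (fun t => ∫ x in (0:ℝ)..(2 * Real.pi), (θ (t, x)) ^ 2) ∧
    ∀ t : ℝ,
      HasDerivAt (fun s => ∫ x in (0:ℝ)..(2 * Real.pi), (θ (s, x)) ^ 2)
        ((1 - 2 * δ) * ∫ x in (0:ℝ)..(2 * Real.pi),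
          (θ (t, x)) ^ 2 * deriv (fun y => h (t, y)) x) t ∧
      (1 - 2 * δ) * (∫ x in (0:ℝ)..(2 * Real.pi),
          (θ (t, x)) ^ 2 * deriv (fun y => h (t, y)) x) ≤ 0 := by
  exact L2_estimate_1d_model_general hδ.1 (hθ.of_le (by simp))
    (fun t => (hh.comp (by fun_prop)).of_le (by simp)) hθper hθnonneg hhilb hpde
end

section
/- Let δ ∈ [1/2, 1] and m₀ > 0, and let θ : ℝ × ℝ → ℝ be a smooth (C^∞) function, 2π-periodic in the space variable, with θ(t,x) ≥ m₀ for all (t,x). For each t let h(t,·) be the periodic Hilbert transform of θ(t,·) (ĥ(t,k) = −i·sgn(k)·θ̂(t,k) for all k ∈ ℤ, where û(k) = (1/2π)∫₀^{2π}u(x)e^{−ikx}dx), and assume h is smooth. Suppose ∂_t θ + (1−δ) h ∂_x θ + δ ∂_x(θ h) = 0. Then the function F(t) = 2π ∑_{k∈ℤ} |k| |θ̂(t,k)|² is differentiable and satisfies F′(t) ≤ −m₀ ∫₀^{2π} (∂_x θ(t,x))² dx for every t. -/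
open MeasureTheory

/-!
Write `v = ℋu` and `Λu = v'`, which has Fourier coefficients `|k| û(k)`. Parseval's identity gives
`‖Λ^{1/2}u‖² = ∫ u Λu`, and since `Λ` is self-adjoint,
`‖Λ^{1/2}u₁‖² - ‖Λ^{1/2}u₂‖² = ∫ (u₁ - u₂) (Λu₁ + Λu₂)`. Along a flow the right side can be
differentiated at `u₁ = u₂ = θ(t)` with no time derivative falling on `Λθ`, whence
`F' = 2 ∫ θ_t Λθ`.

The cubic identity comes from `f = u + i ℋu`, which has only nonnegative frequencies, while `f'` has
only positive ones: `f f'²` has mean zero, and its real part is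
`u (u'² - (Λu)²) - 2 (ℋu) u' Λu`. Inserting the equation for `θ_t` this yields
`F' = -∫ θ (θ_x² + (2δ - 1) (Λθ)²)`.
-/

section FourierCoeffOn

open ComplexConjugate

lemma memLp_restrict_Ioc_of_continuousOn {E : Type*} [NormedAddCommGroup E] {a b : ℝ}
    {f : ℝ → E} (hf : ContinuousOn f (Set.Icc a b)) (p : ENNReal) :
    MemLp f p (volume.restrict (Set.Ioc a b)) := by
  obtain ⟨C, hC⟩ := isCompact_Icc.exists_bound_of_continuousOn hf
  have hfIoc := hf.mono Set.Ioc_subset_Icc_self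
  exact .of_bound (hfIoc.aestronglyMeasurable measurableSet_Ioc) C
    ((ae_restrict_iff' measurableSet_Ioc).2 (.of_forall fun x hx =>
      hC x (Set.Ioc_subset_Icc_self hx)))

lemma hasSum_conj_fourierCoeff_mul {T : ℝ} [Fact (0 < T)]
    (f g : Lp ℂ 2 (AddCircle.haarAddCircle (T := T))) :
    HasSum (fun n => conj (fourierCoeff f n) * fourierCoeff g n)
      (∫ x, conj (f x) * g x ∂AddCircle.haarAddCircle) := by
  have hsum := fourierBasis.hasSum_inner_mul_inner f g
  simp_rw [← inner_conj_symm f (fourierBasis _), ← HilbertBasis.repr_apply_apply,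
    fourierBasis_repr] at hsum
  simpa only [L2.inner_def, RCLike.inner_apply'] using hsum

variable {a b : ℝ} (hab : a < b)

lemma hasSum_conj_fourierCoeffOn_mul {f g : ℝ → ℂ}
    (hf : MemLp f 2 (volume.restrict (Set.Ioc a b)))
    (hg : MemLp g 2 (volume.restrict (Set.Ioc a b))) :
    HasSum (fun n => conj (fourierCoeffOn hab f n) * fourierCoeffOn hab g n)
      ((b - a)⁻¹ • ∫ x in a..b, conj (f x) * g x) := by
  have := Fact.mk (sub_pos.2 hab)
  rw [← add_sub_cancel a b] at hf hg
  have hf' := hf.memLp_liftIoc.haarAddCircle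
  have hg' := hg.memLp_liftIoc.haarAddCircle
  convert hasSum_conj_fourierCoeff_mul hf'.toLp hg'.toLp using 1
  · ext n
    rw [fourierCoeff_congr_ae hf'.coeFn_toLp, fourierCoeff_congr_ae hg'.coeFn_toLp]
    rfl
  · nth_rw 2 [← add_sub_cancel a b]
    rw [← AddCircle.integral_liftIoc_eq_intervalIntegral, ← AddCircle.integral_haarAddCircle]
    apply integral_congr_ae
    filter_upwards [hf'.coeFn_toLp, hg'.coeFn_toLp] with x hfx hgx
    rw [hfx, hgx]
    rfl

lemma fourierCoeffOn_add {f g : ℝ → ℂ} (hf : IntervalIntegrable f volume a b)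
    (hg : IntervalIntegrable g volume a b) (n : ℤ) :
    fourierCoeffOn hab (fun x => f x + g x) n =
      fourierCoeffOn hab f n + fourierCoeffOn hab g n := by
  have hfourier : ContinuousOn (fun x : ℝ => fourier (-n) (x : AddCircle (b - a)))
      (Set.uIcc a b) := by fun_prop
  simp only [fourierCoeffOn_eq_integral, smul_eq_mul, mul_add]
  rw [intervalIntegral.integral_add (hf.continuousOn_mul hfourier)
    (hg.continuousOn_mul hfourier), smul_add]

lemma fourierCoeffOn_conj (f : ℝ → ℂ) (n : ℤ) :
    fourierCoeffOn hab (fun x => conj (f x)) n = conj (fourierCoeffOn hab f (-n)) := by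
  simp only [fourierCoeffOn_eq_integral, Complex.real_smul, map_mul, Complex.conj_ofReal,
    ← intervalIntegral.intervalIntegral_conj, smul_eq_mul, ← fourier_neg, neg_neg]

lemma fourierCoeffOn_fourier_mul (f : ℝ → ℂ) (m n : ℤ) :
    fourierCoeffOn hab (fun x => fourier m (x : AddCircle (b - a)) * f x) n =
      fourierCoeffOn hab f (n - m) := by
  simp only [fourierCoeffOn_eq_integral, smul_eq_mul, ← mul_assoc, ← fourier_add]
  rw [neg_sub, neg_add_eq_sub]

lemma fourierCoeffOn_deriv_eq_mul {f f' : ℝ → ℂ}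
    (hf : ∀ x ∈ Set.uIcc a b, HasDerivAt f (f' x) x) (hf' : IntervalIntegrable f' volume a b)
    (hfab : f b = f a) (n : ℤ) :
    fourierCoeffOn hab f' n =
      2 * Real.pi * Complex.I * n / (b - a) * fourierCoeffOn hab f n := by
  have hba : (b - a : ℂ) ≠ 0 := by exact_mod_cast (sub_pos.2 hab).ne'
  rcases eq_or_ne n 0 with rfl | hn
  · simp [fourierCoeffOn_eq_integral, intervalIntegral.integral_eq_sub_of_hasDerivAt hf hf', hfab]
  · have hn' : (n : ℂ) ≠ 0 := Int.cast_ne_zero.2 hn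
    rw [fourierCoeffOn_of_hasDerivAt hab hn hf hf', hfab]
    field_simp [Real.pi_ne_zero]
    ring

lemma hasSum_fourierCoeffOn_mul {f g : ℝ → ℂ}
    (hf : MemLp f 2 (volume.restrict (Set.Ioc a b)))
    (hg : MemLp g 2 (volume.restrict (Set.Ioc a b))) (n : ℤ) :
    HasSum (fun k => fourierCoeffOn hab f (n - k) * fourierCoeffOn hab g k)
      (fourierCoeffOn hab (fun x => f x * g x) n) := by
  have hφ : MemLp (fun x : ℝ => fourier n (x : AddCircle (b - a)) * conj (f x)) 2
      (volume.restrict (Set.Ioc a b)) := by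
    have hfourier : Continuous fun x : ℝ => fourier n (x : AddCircle (b - a)) := by fun_prop
    exact hf.star.of_le (hfourier.aestronglyMeasurable.mul hf.star.1)
      (.of_forall fun x => by rw [norm_mul, fourier_apply, Circle.norm_coe, one_mul]; rfl)
  convert hasSum_conj_fourierCoeffOn_mul hab hφ hg using 1
  · ext k
    rw [fourierCoeffOn_fourier_mul, fourierCoeffOn_conj, Complex.conj_conj, neg_sub]
  · simp only [fourierCoeffOn_eq_integral, one_div, map_mul, Complex.conj_conj, ← fourier_neg,
      smul_eq_mul, mul_assoc]

lemma fourierCoeffOn_mul_eq_zero_of_lt {f g : ℝ → ℂ}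
    (hf : MemLp f 2 (volume.restrict (Set.Ioc a b)))
    (hg : MemLp g 2 (volume.restrict (Set.Ioc a b))) {p q : ℤ}
    (hfp : ∀ k < p, fourierCoeffOn hab f k = 0) (hgq : ∀ k < q, fourierCoeffOn hab g k = 0)
    {n : ℤ} (hn : n < p + q) : fourierCoeffOn hab (fun x => f x * g x) n = 0 := by
  have hzero : ∀ k, fourierCoeffOn hab f (n - k) * fourierCoeffOn hab g k = 0 := fun k => by
    rcases lt_or_ge k q with hk | hk
    · rw [hgq k hk, mul_zero]
    · rw [hfp (n - k) (by lia), zero_mul]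
  have hsum := hasSum_fourierCoeffOn_mul hab hf hg n
  simp only [hzero] at hsum
  exact hsum.unique hasSum_zero

lemma integral_mul_deriv_sq_eq_zero {f f' : ℝ → ℂ}
    (hf : ∀ x ∈ Set.Icc a b, HasDerivAt f (f' x) x) (hf' : ContinuousOn f' (Set.Icc a b))
    (hfab : f b = f a) (hneg : ∀ k < 0, fourierCoeffOn hab f k = 0) :
    ∫ x in a..b, f x * f' x ^ 2 = 0 := by
  have hcont : ContinuousOn f (Set.Icc a b) := fun x hx => (hf x hx).continuousAt.continuousWithinAt
  have hnonpos : ∀ k < 1, fourierCoeffOn hab f' k = 0 := fun k hk => by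
    rw [fourierCoeffOn_deriv_eq_mul hab (by rwa [Set.uIcc_of_le hab.le])
      (hf'.intervalIntegrable_of_Icc hab.le) hfab]
    rcases (Int.lt_add_one_iff (b := 0).1 hk).lt_or_eq with hk | rfl
    · rw [hneg k hk, mul_zero]
    · simp
  have hprod : ∀ k < 1, fourierCoeffOn hab (fun x => f x * f' x) k = 0 := fun k hk =>
    fourierCoeffOn_mul_eq_zero_of_lt hab (memLp_restrict_Ioc_of_continuousOn hcont 2)
      (memLp_restrict_Ioc_of_continuousOn hf' 2) hneg hnonpos (by lia)
  have hmean := fourierCoeffOn_mul_eq_zero_of_lt hab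
    (memLp_restrict_Ioc_of_continuousOn (hcont.mul hf') 2)
    (memLp_restrict_Ioc_of_continuousOn hf' 2) hprod hnonpos (n := 0) (by lia)
  have hba : ((b - a : ℝ) : ℂ) ≠ 0 := by exact_mod_cast (sub_pos.2 hab).ne'
  simpa [fourierCoeffOn_eq_integral, -Complex.ofReal_sub, hba, pow_two, mul_assoc] using hmean

end FourierCoeffOn

section Hilbert

open Complex ComplexConjugate

lemma fourierCoef_eq_fourierCoeffOn (u : ℝ → ℝ) (k : ℤ) :
    fourierCoef u k = fourierCoeffOn Real.two_pi_pos (fun x => (u x : ℂ)) k := by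
  rw [fourierCoef, fourierCoeffOn_eq_integral, sub_zero, Complex.real_smul]
  congr 2 with x
  rw [fourier_coe_apply, smul_eq_mul, mul_comm]
  congr 2
  push_cast
  field_simp [Real.pi_ne_zero]

lemma hasSum_conj_fourierCoef_mul {u v : ℝ → ℝ} (hu : Continuous u) (hv : Continuous v) :
    HasSum (fun k => conj (fourierCoef u k) * fourierCoef v k)
      (((2 * Real.pi)⁻¹ * ∫ x in (0 : ℝ)..(2 * Real.pi), u x * v x : ℝ) : ℂ) := by
  have hmemLp : ∀ w : ℝ → ℝ, Continuous w →
      MemLp (fun x => (w x : ℂ)) 2 (volume.restrict (Set.Ioc 0 (2 * Real.pi))) := fun w hw =>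
    memLp_restrict_Ioc_of_continuousOn (by fun_prop) 2
  simpa only [fourierCoef_eq_fourierCoeffOn, conj_ofReal, ← ofReal_mul,
    intervalIntegral.integral_ofReal, sub_zero, real_smul] using
    hasSum_conj_fourierCoeffOn_mul Real.two_pi_pos (hmemLp u hu) (hmemLp v hv)

lemma fourierCoef_deriv_eq_mul {u u' : ℝ → ℝ} (hu : ∀ x, HasDerivAt u (u' x) x)
    (hu' : Continuous u') (huper : Function.Periodic u (2 * Real.pi)) (k : ℤ) :
    fourierCoef u' k = I * k * fourierCoef u k := by
  have hends : (u (2 * Real.pi) : ℂ) = u 0 := by exact_mod_cast huper.eq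
  rw [fourierCoef_eq_fourierCoeffOn, fourierCoef_eq_fourierCoeffOn,
    fourierCoeffOn_deriv_eq_mul Real.two_pi_pos (fun x _ => (hu x).ofReal_comp)
      (Continuous.intervalIntegrable (by fun_prop) _ _) hends]
  congr 1
  push_cast
  field_simp [Real.pi_ne_zero]
  ring

/-- The square `‖Λ^{1/2}u‖²` of the homogeneous `H^{1/2}` seminorm of a `2π`-periodic function,
expressed through its Fourier coefficients; it is `0` when the sum diverges. -/
noncomputable def halfSobolevSeminormSq (u : ℝ → ℝ) : ℝ :=
  2 * Real.pi * ∑' k : ℤ, (|k| : ℝ) * ‖fourierCoef u k‖ ^ 2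

/-- `w` is `Λu`, where `Λ = (-∂ₓ²)^{1/2}` is the Fourier multiplier `|k|` on `2π`-periodic
functions. As for `IsHilbertTransformOf`, continuity of `w` makes the relation determine `w`
on a period. -/
def IsSqrtLaplacianOf (w u : ℝ → ℝ) : Prop :=
  Continuous w ∧ ∀ k : ℤ, fourierCoef w k = ((|k| : ℝ) : ℂ) * fourierCoef u k

namespace IsSqrtLaplacianOf

lemma integral_mul_comm {u₁ u₂ w₁ w₂ : ℝ → ℝ} (h₁ : IsSqrtLaplacianOf w₁ u₁)
    (h₂ : IsSqrtLaplacianOf w₂ u₂) (hu₁ : Continuous u₁) (hu₂ : Continuous u₂) :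
    ∫ x in (0 : ℝ)..(2 * Real.pi), u₁ x * w₂ x = ∫ x in (0 : ℝ)..(2 * Real.pi), w₁ x * u₂ x := by
  have hterm : ∀ k, conj (fourierCoef u₁ k) * fourierCoef w₂ k =
      conj (fourierCoef w₁ k) * fourierCoef u₂ k := fun k => by
    rw [h₁.2, h₂.2, map_mul, conj_ofReal]
    ring
  have hsum := hasSum_conj_fourierCoef_mul hu₁ h₂.1
  simp only [hterm] at hsum
  exact mul_left_cancel₀ (inv_pos.2 Real.two_pi_pos).ne'
    (ofReal_injective (hsum.unique (hasSum_conj_fourierCoef_mul h₁.1 hu₂)))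

lemma halfSobolevSeminormSq_eq_integral {u w : ℝ → ℝ} (hw : IsSqrtLaplacianOf w u)
    (hu : Continuous u) :
    halfSobolevSeminormSq u = ∫ x in (0 : ℝ)..(2 * Real.pi), u x * w x := by
  have hterm : ∀ k, conj (fourierCoef u k) * fourierCoef w k =
      (((|k| : ℝ) * ‖fourierCoef u k‖ ^ 2 : ℝ) : ℂ) := fun k => by
    rw [hw.2, mul_left_comm, conj_mul']
    push_cast
    rfl
  have hsum := hasSum_conj_fourierCoef_mul hu hw.1
  simp only [hterm, hasSum_ofReal] at hsum
  rw [halfSobolevSeminormSq, hsum.tsum_eq, mul_inv_cancel_left₀ Real.two_pi_pos.ne']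

lemma halfSobolevSeminormSq_sub {u₁ u₂ w₁ w₂ : ℝ → ℝ} (h₁ : IsSqrtLaplacianOf w₁ u₁)
    (h₂ : IsSqrtLaplacianOf w₂ u₂) (hu₁ : Continuous u₁) (hu₂ : Continuous u₂) :
    halfSobolevSeminormSq u₁ - halfSobolevSeminormSq u₂ =
      ∫ x in (0 : ℝ)..(2 * Real.pi), (u₁ x - u₂ x) * (w₁ x + w₂ x) := by
  have hw₁ := h₁.1
  have hw₂ := h₂.1
  have hint : ∀ f : ℝ → ℝ, Continuous f → IntervalIntegrable f volume 0 (2 * Real.pi) :=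
    fun f hf => hf.intervalIntegrable _ _
  have hsplit : ∫ x in (0 : ℝ)..(2 * Real.pi), (u₁ x - u₂ x) * (w₁ x + w₂ x) =
      ((∫ x in (0 : ℝ)..(2 * Real.pi), u₁ x * w₁ x) -
        ∫ x in (0 : ℝ)..(2 * Real.pi), u₂ x * w₂ x) +
      ((∫ x in (0 : ℝ)..(2 * Real.pi), u₁ x * w₂ x) -
        ∫ x in (0 : ℝ)..(2 * Real.pi), w₁ x * u₂ x) := by
    rw [← intervalIntegral.integral_sub (hint _ (by fun_prop)) (hint _ (by fun_prop)),
      ← intervalIntegral.integral_sub (hint _ (by fun_prop)) (hint _ (by fun_prop)),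
      ← intervalIntegral.integral_add (hint _ (by fun_prop)) (hint _ (by fun_prop))]
    congr 1 with x
    ring
  rw [hsplit, h₁.integral_mul_comm h₂ hu₁ hu₂, sub_self, add_zero,
    h₁.halfSobolevSeminormSq_eq_integral hu₁, h₂.halfSobolevSeminormSq_eq_integral hu₂]

end IsSqrtLaplacianOf

namespace IsHilbertTransformOf

variable {u u' v v' : ℝ → ℝ}

lemma isSqrtLaplacianOf (hvu : IsHilbertTransformOf v u) (hv : ∀ x, HasDerivAt v (v' x) x)
    (hv' : Continuous v') : IsSqrtLaplacianOf v' u := by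
  refine ⟨hv', fun k => ?_⟩
  have hsign : ((|k| : ℝ) : ℂ) = Int.sign k * k := by
    exact_mod_cast (Int.sign_mul_self_eq_abs k).symm
  rw [fourierCoef_deriv_eq_mul hv hv' hvu.2.1, hvu.2.2, hsign]
  linear_combination (-(k : ℂ) * (Int.sign k : ℂ) * fourierCoef u k) * I_mul_I

lemma fourierCoeffOn_add_mul_I_eq_zero (hvu : IsHilbertTransformOf v u) (hu : Continuous u)
    {k : ℤ} (hk : k < 0) :
    fourierCoeffOn Real.two_pi_pos (fun x => (u x : ℂ) + I * v x) k = 0 := by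
  have hv : Continuous v := hvu.1
  rw [fourierCoeffOn_add _ (Continuous.intervalIntegrable (by fun_prop) _ _)
    (Continuous.intervalIntegrable (by fun_prop) _ _), fourierCoeffOn.const_mul,
    ← fourierCoef_eq_fourierCoeffOn, ← fourierCoef_eq_fourierCoeffOn, hvu.2.2,
    Int.sign_eq_neg_one_of_neg hk]
  linear_combination (norm := (push_cast; ring)) fourierCoef u k * I_mul_I

lemma integral_mul_deriv_sq_sub_deriv_sq (hvu : IsHilbertTransformOf v u)
    (huper : Function.Periodic u (2 * Real.pi))
    (hu : ∀ x, HasDerivAt u (u' x) x) (hu' : Continuous u')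
    (hv : ∀ x, HasDerivAt v (v' x) x) (hv' : Continuous v') :
    ∫ x in (0 : ℝ)..(2 * Real.pi), u x * (u' x ^ 2 - v' x ^ 2) =
      ∫ x in (0 : ℝ)..(2 * Real.pi), 2 * (v x * u' x * v' x) := by
  have hucont : Continuous u := continuous_iff_continuousAt.2 fun x => (hu x).continuousAt
  have hvcont : Continuous v := hvu.1
  have hzero := integral_mul_deriv_sq_eq_zero Real.two_pi_pos
    (f := fun x => (u x : ℂ) + I * v x) (f' := fun x => (u' x : ℂ) + I * v' x)
    (fun x _ => (hu x).ofReal_comp.add ((hv x).ofReal_comp.const_mul I)) (by fun_prop)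
    (by simp only [huper.eq, hvu.2.1.eq])
    (fun k hk => hvu.fourierCoeffOn_add_mul_I_eq_zero hucont hk)
  have hre : ∀ x, reCLM (((u x : ℂ) + I * v x) * ((u' x : ℂ) + I * v' x) ^ 2) =
      u x * (u' x ^ 2 - v' x ^ 2) - 2 * (v x * u' x * v' x) := fun x => by
    simp [pow_two]
    ring
  rw [← sub_eq_zero, ← intervalIntegral.integral_sub
    (Continuous.intervalIntegrable (by fun_prop) _ _)
    (Continuous.intervalIntegrable (by fun_prop) _ _)]
  simp only [← hre]
  rw [reCLM.intervalIntegral_comp_comm (Continuous.intervalIntegrable (by fun_prop) _ _), hzero,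
    map_zero]

lemma two_mul_integral_flux_mul_deriv (hvu : IsHilbertTransformOf v u)
    (huper : Function.Periodic u (2 * Real.pi))
    (hu : ∀ x, HasDerivAt u (u' x) x) (hu' : Continuous u')
    (hv : ∀ x, HasDerivAt v (v' x) x) (hv' : Continuous v') (δ : ℝ) :
    2 * ∫ x in (0 : ℝ)..(2 * Real.pi), ((1 - δ) * v x * u' x + δ * (u' x * v x + u x * v' x)) * v' x
      = ∫ x in (0 : ℝ)..(2 * Real.pi), u x * (u' x ^ 2 + (2 * δ - 1) * v' x ^ 2) := by
  have hucont : Continuous u := continuous_iff_continuousAt.2 fun x => (hu x).continuousAt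
  have hvcont : Continuous v := hvu.1
  have hint : ∀ f : ℝ → ℝ, Continuous f → IntervalIntegrable f volume 0 (2 * Real.pi) :=
    fun f hf => hf.intervalIntegrable _ _
  rw [← intervalIntegral.integral_const_mul]
  calc
    _ = ∫ x in (0 : ℝ)..(2 * Real.pi), (2 * (v x * u' x * v' x) + 2 * δ * (u x * v' x ^ 2)) := by
      congr 1 with x
      ring
    _ = ∫ x in (0 : ℝ)..(2 * Real.pi),
          (u x * (u' x ^ 2 - v' x ^ 2) + 2 * δ * (u x * v' x ^ 2)) := by
      rw [intervalIntegral.integral_add (hint _ (by fun_prop)) (hint _ (by fun_prop)),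
        intervalIntegral.integral_add (hint _ (by fun_prop)) (hint _ (by fun_prop)),
        hvu.integral_mul_deriv_sq_sub_deriv_sq huper hu hu' hv hv']
    _ = _ := by
      congr 1 with x
      ring

end IsHilbertTransformOf

end Hilbert

section Evolution

lemma continuous_deriv_fst {E : Type*} [NormedAddCommGroup E] [NormedSpace ℝ E]
    {g : ℝ × ℝ → E} (hg : ContDiff ℝ 1 g) :
    Continuous fun p : ℝ × ℝ => deriv (fun s => g (s, p.2)) p.1 := by
  simp only [← fderiv_apply_one_eq_deriv]
  exact (Continuous.fderiv_one (f := fun (p : ℝ × ℝ) s => g (s, p.2)) (by fun_prop)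
    continuous_fst).clm_apply continuous_const

lemma continuous_deriv_snd {E : Type*} [NormedAddCommGroup E] [NormedSpace ℝ E]
    {g : ℝ × ℝ → E} (hg : ContDiff ℝ 1 g) :
    Continuous fun p : ℝ × ℝ => deriv (fun y => g (p.1, y)) p.2 := by
  simp only [← fderiv_apply_one_eq_deriv]
  exact (Continuous.fderiv_one (f := fun (p : ℝ × ℝ) y => g (p.1, y)) (by fun_prop)
    continuous_snd).clm_apply continuous_const

lemma exists_continuous_sub_eq_smul {X E : Type*} [TopologicalSpace X] [NormedAddCommGroup E]
    [NormedSpace ℝ E] [CompleteSpace E] {g g' : ℝ × X → E} (hg' : Continuous g')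
    (hg : ∀ s x, HasDerivAt (fun r => g (r, x)) (g' (s, x)) s) (t : ℝ) :
    ∃ q : ℝ × X → E, Continuous q ∧ (∀ x, q (t, x) = g' (t, x)) ∧
      ∀ s x, g (s, x) - g (t, x) = (s - t) • q (s, x) := by
  refine ⟨fun p => ∫ r in (0 : ℝ)..1, g' (t + r • (p.1 - t), p.2), by fun_prop,
    fun x => by simp, fun s x => ?_⟩
  rw [intervalIntegral.integral_unitInterval_deriv_eq_sub (f := fun r => g (r, x))
    (f' := fun r => g' (r, x)) (by fun_prop) fun r _ => hg _ x, add_sub_cancel]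

lemma hasDerivAt_integral_sub_mul {g g' w : ℝ × ℝ → ℝ} (hg' : Continuous g')
    (hg : ∀ s x, HasDerivAt (fun r => g (r, x)) (g' (s, x)) s) (hw : Continuous w) (a b t : ℝ) :
    HasDerivAt (fun s => ∫ x in a..b, (g (s, x) - g (t, x)) * w (s, x))
      (∫ x in a..b, g' (t, x) * w (t, x)) t := by
  obtain ⟨q, hq, hqt, hgq⟩ := exists_continuous_sub_eq_smul hg' hg t
  have hcont : Continuous fun s => ∫ x in a..b, q (s, x) * w (s, x) := by fun_prop
  simp only [hgq, smul_eq_mul, mul_assoc, intervalIntegral.integral_const_mul, ← hqt]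
  rw [hasDerivAt_iff_tendsto_slope]
  refine (hcont.tendsto t |>.mono_left nhdsWithin_le_nhds).congr' ?_
  filter_upwards [self_mem_nhdsWithin] with s hs
  rw [slope_def_field, sub_self, zero_mul, sub_zero, mul_div_cancel_left₀ _ (sub_ne_zero.2 hs)]

theorem hasDerivAt_halfSobolevSeminormSq {θ θ' w : ℝ × ℝ → ℝ}
    (hθ : ∀ t, Continuous fun x => θ (t, x)) (hθ' : Continuous θ')
    (hθθ' : ∀ s x, HasDerivAt (fun r => θ (r, x)) (θ' (s, x)) s) (hw : Continuous w)
    (hwθ : ∀ t, IsSqrtLaplacianOf (fun x => w (t, x)) (fun x => θ (t, x))) (t : ℝ) :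
    HasDerivAt (fun s => halfSobolevSeminormSq fun x => θ (s, x))
      (2 * ∫ x in (0 : ℝ)..(2 * Real.pi), θ' (t, x) * w (t, x)) t := by
  have hF : ∀ s, halfSobolevSeminormSq (fun x => θ (s, x)) =
      (∫ x in (0 : ℝ)..(2 * Real.pi), (θ (s, x) - θ (t, x)) * (w (s, x) + w (t, x))) +
        halfSobolevSeminormSq (fun x => θ (t, x)) := fun s =>
    sub_eq_iff_eq_add.1 ((hwθ s).halfSobolevSeminormSq_sub (hwθ t) (hθ s) (hθ t))
  have hsum : Continuous fun p : ℝ × ℝ => w p + w (t, p.2) := by fun_prop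
  rw [funext hF, ← intervalIntegral.integral_const_mul]
  simp only [mul_left_comm (2 : ℝ) (θ' _), two_mul (w _)]
  exact (hasDerivAt_integral_sub_mul hθ' hθθ' hsum 0 (2 * Real.pi) t).add_const _

theorem hasDerivAt_halfSobolevSeminormSq_of_pde {δ : ℝ} {θ h : ℝ × ℝ → ℝ}
    (hθ : ContDiff ℝ 1 θ) (hh : ContDiff ℝ 1 h)
    (hθper : ∀ t x : ℝ, θ (t, x + 2 * Real.pi) = θ (t, x))
    (hhilb : ∀ t : ℝ, IsHilbertTransformOf (fun x => h (t, x)) (fun x => θ (t, x)))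
    (hpde : ∀ t x : ℝ,
      deriv (fun s => θ (s, x)) t
        + (1 - δ) * h (t, x) * deriv (fun y => θ (t, y)) x
        + δ * deriv (fun y => θ (t, y) * h (t, y)) x = 0) (t : ℝ) :
    HasDerivAt (fun s => halfSobolevSeminormSq fun x => θ (s, x))
      (-∫ x in (0 : ℝ)..(2 * Real.pi), θ (t, x) *
        (deriv (fun y => θ (t, y)) x ^ 2 + (2 * δ - 1) * deriv (fun y => h (t, y)) x ^ 2)) t := by
  have hθdiff : Differentiable ℝ θ := hθ.differentiable one_ne_zero
  have hhdiff : Differentiable ℝ h := hh.differentiable one_ne_zero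
  have hθt : ∀ s x, HasDerivAt (fun r => θ (r, x)) (deriv (fun r => θ (r, x)) s) s := fun s x =>
    (show DifferentiableAt ℝ (fun r => θ (r, x)) s by fun_prop).hasDerivAt
  have hθx : ∀ s x, HasDerivAt (fun y => θ (s, y)) (deriv (fun y => θ (s, y)) x) x := fun s x =>
    (show DifferentiableAt ℝ (fun y => θ (s, y)) x by fun_prop).hasDerivAt
  have hhx : ∀ s x, HasDerivAt (fun y => h (s, y)) (deriv (fun y => h (s, y)) x) x := fun s x =>
    (show DifferentiableAt ℝ (fun y => h (s, y)) x by fun_prop).hasDerivAt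
  have hθxcont : ∀ s, Continuous (deriv fun y => θ (s, y)) := fun s =>
    (continuous_deriv_snd hθ).comp (Continuous.prodMk_right s)
  have hhxcont : ∀ s, Continuous (deriv fun y => h (s, y)) := fun s =>
    (continuous_deriv_snd hh).comp (Continuous.prodMk_right s)
  have hflux : ∀ x, deriv (fun s => θ (s, x)) t = -((1 - δ) * h (t, x) * deriv (fun y => θ (t, y)) x
      + δ * (deriv (fun y => θ (t, y)) x * h (t, x) + θ (t, x) * deriv (fun y => h (t, y)) x)) :=
    fun x => by
      rw [← ((hθx t x).fun_mul (hhx t x)).deriv]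
      linear_combination hpde t x
  rw [← (hhilb t).two_mul_integral_flux_mul_deriv (hθper t) (hθx t) (hθxcont t) (hhx t) (hhxcont t),
    ← mul_neg, ← intervalIntegral.integral_neg]
  simp only [← neg_mul, ← hflux]
  exact hasDerivAt_halfSobolevSeminormSq (fun s => by fun_prop) (continuous_deriv_fst hθ) hθt
    (continuous_deriv_snd hh) (fun s => (hhilb s).isSqrtLaplacianOf (hhx s) (hhxcont s)) t

theorem H_half_estimate_1d_model_general {δ m₀ : ℝ} (hδ : 1 / 2 ≤ δ) (hm₀ : 0 ≤ m₀)
    {θ h : ℝ × ℝ → ℝ} (hθ : ContDiff ℝ 1 θ) (hh : ContDiff ℝ 1 h)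
    (hθper : ∀ t x : ℝ, θ (t, x + 2 * Real.pi) = θ (t, x))
    (hθlb : ∀ p : ℝ × ℝ, m₀ ≤ θ p)
    (hhilb : ∀ t : ℝ, IsHilbertTransformOf (fun x => h (t, x)) (fun x => θ (t, x)))
    (hpde : ∀ t x : ℝ,
      deriv (fun s => θ (s, x)) t
        + (1 - δ) * h (t, x) * deriv (fun y => θ (t, y)) x
        + δ * deriv (fun y => θ (t, y) * h (t, y)) x = 0) (t : ℝ) :
    DifferentiableAt ℝ (fun s => halfSobolevSeminormSq fun x => θ (s, x)) t ∧
      deriv (fun s => halfSobolevSeminormSq fun x => θ (s, x)) t ≤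
        -m₀ * ∫ x in (0 : ℝ)..(2 * Real.pi), (deriv (fun y => θ (t, y)) x) ^ 2 := by
  have hderiv := hasDerivAt_halfSobolevSeminormSq_of_pde hθ hh hθper hhilb hpde t
  refine ⟨hderiv.differentiableAt, ?_⟩
  have hθxcont : Continuous (deriv fun y => θ (t, y)) :=
    (continuous_deriv_snd hθ).comp (Continuous.prodMk_right t)
  have hhxcont : Continuous (deriv fun y => h (t, y)) :=
    (continuous_deriv_snd hh).comp (Continuous.prodMk_right t)
  rw [hderiv.deriv, neg_mul, neg_le_neg_iff, ← intervalIntegral.integral_const_mul]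
  refine intervalIntegral.integral_mono_on Real.two_pi_pos.le
    (Continuous.intervalIntegrable (by fun_prop) _ _)
    (Continuous.intervalIntegrable (by fun_prop) _ _) fun x _ => ?_
  have hδ' : 0 ≤ 2 * δ - 1 := by linarith
  exact mul_le_mul (hθlb _) (le_add_of_nonneg_right (by positivity)) (sq_nonneg _)
    (hm₀.trans (hθlb _))

end Evolution

/-- Ḣ^{1/2} a priori estimate for `θ_t + (1−δ) ℋθ·θ_x + δ (θ ℋθ)_x = 0` with
`δ ∈ [1/2,1]` and `θ ≥ m₀ > 0`: the seminorm `F(t) = 2π ∑_k |k| |θ̂(t,k)|²`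
is differentiable with `F′(t) ≤ −m₀ ∫₀^{2π} (θ_x)² dx`. -/
theorem H_half_estimate_1d_model (δ m₀ : ℝ) (hδ : δ ∈ Set.Icc (1/2 : ℝ) 1)
    (hm₀ : 0 < m₀)
    (θ h : ℝ × ℝ → ℝ)
    (hθ : ContDiff ℝ (⊤ : ℕ∞) θ) (hh : ContDiff ℝ (⊤ : ℕ∞) h)
    (hθper : ∀ t x : ℝ, θ (t, x + 2 * Real.pi) = θ (t, x))
    (hθlb : ∀ p : ℝ × ℝ, m₀ ≤ θ p)
    (hhilb : ∀ t : ℝ, IsHilbertTransformOf (fun x => h (t, x)) (fun x => θ (t, x)))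
    (hpde : ∀ t x : ℝ,
      deriv (fun s => θ (s, x)) t
        + (1 - δ) * h (t, x) * deriv (fun y => θ (t, y)) x
        + δ * deriv (fun y => θ (t, y) * h (t, y)) x = 0) :
    ∀ t : ℝ,
      DifferentiableAt ℝ
        (fun s => 2 * Real.pi *
          ∑' k : ℤ, (|k| : ℝ) * ‖fourierCoef (fun x => θ (s, x)) k‖ ^ 2) t ∧
      deriv (fun s => 2 * Real.pi *
          ∑' k : ℤ, (|k| : ℝ) * ‖fourierCoef (fun x => θ (s, x)) k‖ ^ 2) t ≤
        -m₀ * ∫ x in (0:ℝ)..(2 * Real.pi), (deriv (fun y => θ (t, y)) x) ^ 2 :=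
  H_half_estimate_1d_model_general hδ.1 hm₀.le (hθ.of_le (by simp)) (hh.of_le (by simp)) hθper
    hθlb hhilb hpde
end
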